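/- A triangulation of the non-orientable surface of genus 3 (Euler characteristic -1) has at least 9 vertices. -/

import Mathlib

/-- A finite combinatorial closed surface (triangulation of a closed surface):
a nonempty finite family of 3-element faces on a finite vertex set such that every
edge lies in exactly two faces, every vertex lies in a face, the surface is connected,
and the link of every vertex is connected (together with the edge condition this makes
every vertex link a single cycle, so the underlying space is a closed surface). -/
structure CombClosedSurface (V : Type*) [DecidableEq V] [Fintype V] where
  faces : Finset (Finset V)
  faces_nonempty : faces.Nonempty
  face_card : ∀ t ∈ faces, t.card = 3
  edge_in_two_faces : ∀ e : Finset V, e.card = 2 → (∃ t ∈ faces, e ⊆ t) →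
    (faces.filter fun t => e ⊆ t).card = 2
  vertex_in_face : ∀ v : V, ∃ t ∈ faces, v ∈ t
  connected : (SimpleGraph.fromRel fun u w => ∃ t ∈ faces, u ∈ t ∧ w ∈ t).Connected
  link_connected : ∀ v : V,
    ((SimpleGraph.fromRel fun u w => insert v ({u, w} : Finset V) ∈ faces).induce
      {u : V | u ≠ v ∧ ∃ t ∈ faces, v ∈ t ∧ u ∈ t}).Connected

/-- The edges of a combinatorial closed surface: the 2-element vertex sets contained
in some face. -/
def CombClosedSurface.edgeSet {V : Type*} [DecidableEq V] [Fintype V]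
    (S : CombClosedSurface V) : Finset (Finset V) :=
  (Finset.powersetCard 2 (Finset.univ : Finset V)).filter fun e => ∃ t ∈ S.faces, e ⊆ t

/-- An orientation of a combinatorial closed surface: a choice, for every face, of a
cyclic order of its three vertices (encoded by the successor map `o t`), such that two
distinct faces sharing an edge induce opposite directions on that edge. -/
def CombClosedSurface.IsOrientation {V : Type*} [DecidableEq V] [Fintype V]
    (S : CombClosedSurface V) (o : Finset V → V → V) : Prop :=
  (∀ t ∈ S.faces, ∀ v ∈ t, o t v ∈ t) ∧
  (∀ t ∈ S.faces, ∀ v ∈ t, o t v ≠ v) ∧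
  (∀ t ∈ S.faces, ∀ v ∈ t, o t (o t v) ≠ v) ∧
  (∀ t ∈ S.faces, ∀ v ∈ t, o t (o t (o t v)) = v) ∧
  (∀ t ∈ S.faces, ∀ t' ∈ S.faces, t ≠ t' →
    ∀ u v : V, u ∈ t → u ∈ t' → v ∈ t → v ∈ t' → o t u = v → o t' v = u)

/-- A combinatorial closed surface is orientable if it admits an orientation. -/
def CombClosedSurface.Orientable {V : Type*} [DecidableEq V] [Fintype V]
    (S : CombClosedSurface V) : Prop :=
  ∃ o : Finset V → V → V, S.IsOrientation o

namespace N3Search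

/-- Index of the triangle `{i, j, k}`: the bitmask of its vertex set. -/
def code (i j k : ℕ) : ℕ := 2 ^ i ||| 2 ^ j ||| 2 ^ k

/-- Singleton bitmask of the triangle `{i, j, k}`. -/
def tri (i j k : ℕ) : ℕ := 2 ^ code i j k

/-- Vertices other than `i`, `j`. -/
def others (i j : ℕ) : List ℕ := (List.range 8).filter fun k => k != i && k != j

/-- Mask of all triangles containing the edge `i j`. -/
def star (i j : ℕ) : ℕ := (others i j).foldr (fun k s => tri i j k ||| s) 0

/-- A triple of triangles contained in the mask `c`. -/
def bad (c v x y z : ℕ) : Bool :=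
  let g := tri v x y ||| tri v y z ||| tri v x z
  (c &&& g) == g

/-- Local test for the absence of 3-cycles in vertex links. -/
def good (c i j k l : ℕ) : Bool :=
  !(bad c i j k l) && !(bad c j i k l) &&
    (others i j).all (fun m => (m == k || !(bad c k i j m)) && (m == l || !(bad c l i j m)))

/-- Backtracking search over the list of edges. -/
def search : List (ℕ × ℕ) → ℕ → ℕ → Bool
  | [], _, _ => true
  | e :: es, cur, dec =>
    (others e.1 e.2).any fun k => (others e.1 e.2).any fun l =>
      Nat.blt k l &&
      ((((cur ^^^ (tri e.1 e.2 k ||| tri e.1 e.2 l)) &&& dec &&& star e.1 e.2) == 0) &&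
      (good (cur ||| (tri e.1 e.2 k ||| tri e.1 e.2 l)) e.1 e.2 k l &&
        search es (cur ||| (tri e.1 e.2 k ||| tri e.1 e.2 l)) (dec ||| star e.1 e.2)))

/-- The edges, in search order. -/
def order : List (ℕ × ℕ) :=
  [(0,6),(1,6),(2,6),(3,6),(4,6),(5,6),(0,1),(0,2),(0,3),(0,4),(0,5),(0,7),
   (1,2),(1,3),(1,4),(1,5),(1,7),(2,3),(2,4),(2,5),(2,7),(3,4),(3,5),(3,7),(4,5),(4,7),(5,7)]

def cur0 : ℕ := tri 6 0 1 ||| tri 6 1 2 ||| tri 6 2 3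

set_option maxRecDepth 100000 in
theorem search_false : search order cur0 (cur0 ||| star 6 7) = false := by
  decide +kernel

theorem mem_others {i j k : ℕ} : k ∈ others i j ↔ k < 8 ∧ k ≠ i ∧ k ≠ j := by
  simp [others]

theorem testBit_tri {i j k n : ℕ} : (tri i j k).testBit n = true ↔ code i j k = n := by
  simp [tri, Nat.testBit_two_pow]

theorem testBit_star {i j n : ℕ} :
    (star i j).testBit n = true ↔ ∃ k, k < 8 ∧ k ≠ i ∧ k ≠ j ∧ code i j k = n := by
  have h : ∀ ks : List ℕ, (ks.foldr (fun k s => tri i j k ||| s) 0).testBit n = true ↔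
      ∃ k ∈ ks, code i j k = n := by
    intro ks
    induction ks with
    | nil => simp
    | cons a t ih => simp [Nat.testBit_or, ih, testBit_tri]
  unfold star
  rw [h]
  simp [mem_others, and_assoc]

/-- The combinatorial conditions. -/
structure Model (P : ℕ → Prop) : Prop where
  edge : ∀ i j, i < 8 → j < 8 → i ≠ j → ¬ (6 ≤ i ∧ 6 ≤ j) → ∃ k l, k < 8 ∧ l < 8 ∧ k < l ∧
    k ≠ i ∧ k ≠ j ∧ l ≠ i ∧ l ≠ j ∧ P (code i j k) ∧ P (code i j l) ∧
    ∀ m, m < 8 → m ≠ i → m ≠ j → P (code i j m) → m = k ∨ m = l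
  forb : ∀ v x y z, v < 8 → x < 8 → y < 8 → z < 8 → v ≠ x → v ≠ y → v ≠ z → x ≠ y → x ≠ z →
    y ≠ z → P (code v x y) → P (code v y z) → P (code v x z) → False

theorem bad_false {P : ℕ → Prop} (hP : Model P) {c : ℕ} (hc : ∀ n, c.testBit n = true → P n)
    {v x y z : ℕ} (hv : v < 8) (hx : x < 8) (hy : y < 8) (hz : z < 8) (h1 : v ≠ x) (h2 : v ≠ y)
    (h3 : v ≠ z) (h4 : x ≠ y) (h5 : x ≠ z) (h6 : y ≠ z) : bad c v x y z = false := by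
  by_contra h
  simp only [bad, Bool.not_eq_false, beq_iff_eq] at h
  have key : ∀ n, (tri v x y ||| tri v y z ||| tri v x z).testBit n = true → P n := by
    intro n hn
    apply hc
    rw [← h, Nat.testBit_and] at hn
    simp only [Bool.and_eq_true] at hn
    exact hn.1
  apply hP.forb v x y z hv hx hy hz h1 h2 h3 h4 h5 h6 <;> apply key <;>
    simp [Nat.testBit_or, testBit_tri]

theorem search_true {P : ℕ → Prop} (hP : Model P) (es : List (ℕ × ℕ)) :
    (∀ e ∈ es, e.1 < 8 ∧ e.2 < 8 ∧ e.1 ≠ e.2 ∧ ¬ (6 ≤ e.1 ∧ 6 ≤ e.2)) → ∀ cur dec : ℕ,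
    (∀ n, cur.testBit n = true → P n) →
    (∀ n, dec.testBit n = true → P n → cur.testBit n = true) → search es cur dec = true := by
  induction es with
  | nil => intros; rfl
  | cons e es ih =>
    intro he cur dec h1 h2
    obtain ⟨hi, hj, hij, h67⟩ := he e (by simp)
    obtain ⟨i, j⟩ := e
    simp only at hi hj hij h67
    obtain ⟨k, l, hk, hl, hkl, hki, hkj, hli, hlj, Pk, Pl, hu⟩ := hP.edge i j hi hj hij h67
    have hp : ∀ n, (tri i j k ||| tri i j l).testBit n = true → P n := by
      intro n hn
      simp only [Nat.testBit_or, Bool.or_eq_true, testBit_tri] at hn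
      rcases hn with rfl | rfl <;> assumption
    have hE : ∀ n, (star i j).testBit n = true → P n →
        (tri i j k ||| tri i j l).testBit n = true := by
      intro n hn hPn
      obtain ⟨m, hm, hmi, hmj, rfl⟩ := testBit_star.1 hn
      simp only [Nat.testBit_or, Bool.or_eq_true, testBit_tri]
      rcases hu m hm hmi hmj hPn with rfl | rfl <;> simp
    have hc : ∀ n, (cur ||| (tri i j k ||| tri i j l)).testBit n = true → P n := by
      intro n hn
      rw [Nat.testBit_or, Bool.or_eq_true] at hn
      exact hn.elim (h1 n) (hp n)
    simp only [search, List.any_eq_true, Bool.and_eq_true]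
    refine ⟨k, mem_others.2 ⟨hk, hki, hkj⟩, l, mem_others.2 ⟨hl, hli, hlj⟩, ?_, ?_, ?_, ?_⟩
    · simpa using hkl
    · rw [beq_iff_eq]
      apply Nat.eq_of_testBit_eq
      intro n
      have a1 := h1 n
      have a2 := h2 n
      have a3 := hp n
      have a4 := hE n
      rw [Nat.testBit_and, Nat.testBit_and, Nat.testBit_xor, Nat.zero_testBit]
      generalize (tri i j k ||| tri i j l).testBit n = b1 at *
      generalize cur.testBit n = b2 at *
      generalize dec.testBit n = b3 at *
      generalize (star i j).testBit n = b4 at *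
      cases b1 <;> cases b2 <;> cases b3 <;> cases b4 <;> simp_all
    · simp only [good, Bool.and_eq_true, Bool.not_eq_true', List.all_eq_true, Bool.or_eq_true,
        beq_iff_eq]
      refine ⟨⟨bad_false hP hc hi hj hk hl hij hki.symm hli.symm hkj.symm hlj.symm hkl.ne,
        bad_false hP hc hj hi hk hl hij.symm hkj.symm hlj.symm hki.symm hli.symm hkl.ne⟩, ?_⟩
      intro m hm
      obtain ⟨hm, hmi, hmj⟩ := mem_others.1 hm
      constructor
      · by_cases h : m = k
        · exact Or.inl h
        · exact Or.inr (bad_false hP hc hk hi hj hm hki hkj (Ne.symm h) hij hmi.symm hmj.symm)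
      · by_cases h : m = l
        · exact Or.inl h
        · exact Or.inr (bad_false hP hc hl hi hj hm hli hlj (Ne.symm h) hij hmi.symm hmj.symm)
    · refine ih (fun e he' => he e (by simp [he'])) _ _ hc ?_
      intro n hn hPn
      rw [Nat.testBit_or, Bool.or_eq_true] at hn ⊢
      rcases hn with hn | hn
      · exact Or.inl (h2 n hn hPn)
      · exact Or.inr (hE n hn hPn)

theorem no_model {P : ℕ → Prop} (hP : Model P) (h67 : ∀ k, k < 6 → ¬ P (code 6 7 k))
    (a : P (code 6 0 1)) (b : P (code 6 1 2)) (c : P (code 6 2 3)) : False := by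
  have h := search_true hP order (by decide) cur0 (cur0 ||| star 6 7) ?_ ?_
  · rw [search_false] at h
    exact Bool.noConfusion h
  · intro n hn
    simp only [cur0, Nat.testBit_or, Bool.or_eq_true, testBit_tri] at hn
    rcases hn with (rfl | rfl) | rfl <;> assumption
  · intro n hn hPn
    rw [Nat.testBit_or, Bool.or_eq_true] at hn
    refine hn.resolve_right ?_
    intro hs
    obtain ⟨k, hk, h6, h7, rfl⟩ := testBit_star.1 hs
    exact h67 k (by omega) hPn

end N3Search

namespace CombClosedSurface

variable {V : Type*} [DecidableEq V] [Fintype V]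

theorem three_faces (S : CombClosedSurface V) : 3 * S.faces.card = 2 * S.edgeSet.card := by
  have h := Finset.sum_card_bipartiteAbove_eq_sum_card_bipartiteBelow
    (s := S.faces) (t := S.edgeSet) (fun t e => e ⊆ t)
  have h1 : ∀ t ∈ S.faces, (Finset.bipartiteAbove (fun t e => e ⊆ t) S.edgeSet t).card = 3 := by
    intro t ht
    have : Finset.bipartiteAbove (fun t e => e ⊆ t) S.edgeSet t = Finset.powersetCard 2 t := by
      ext e
      simp only [Finset.bipartiteAbove, edgeSet, Finset.mem_filter, Finset.mem_powersetCard,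
        Finset.subset_univ, true_and]
      constructor
      · rintro ⟨⟨h1, -⟩, h2⟩
        exact ⟨h2, h1⟩
      · rintro ⟨h1, h2⟩
        exact ⟨⟨h2, t, ht, h1⟩, h1⟩
    rw [this, Finset.card_powersetCard, S.face_card t ht]
    rfl
  have h2 : ∀ e ∈ S.edgeSet, (Finset.bipartiteBelow (fun t e => e ⊆ t) S.faces e).card = 2 := by
    intro e he
    simp only [edgeSet, Finset.mem_filter, Finset.mem_powersetCard, Finset.subset_univ,
      true_and] at he
    exact S.edge_in_two_faces e he.1 he.2
  rw [Finset.sum_congr rfl h1, Finset.sum_congr rfl h2] at h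
  simp only [Finset.sum_const, smul_eq_mul] at h
  omega

theorem face_distinct (S : CombClosedSurface V) {x y z : V}
    (h : ({x, y, z} : Finset V) ∈ S.faces) : x ≠ y ∧ x ≠ z ∧ y ≠ z := by
  have := S.face_card _ h
  refine ⟨?_, ?_, ?_⟩
  · rintro rfl
    have h2 := Finset.card_le_two (a := x) (b := z)
    simp only [Finset.mem_insert, Finset.mem_singleton, true_or, Finset.insert_eq_of_mem] at this
    omega
  · rintro rfl
    have h2 := Finset.card_le_two (a := y) (b := x)
    rw [Finset.insert_eq_of_mem (by simp)] at this
    omega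
  · rintro rfl
    have h2 := Finset.card_le_two (a := x) (b := y)
    simp only [Finset.pair_eq_singleton] at this
    omega

theorem edge_faces (S : CombClosedSurface V) {x y : V} (hxy : x ≠ y)
    (he : ∃ t ∈ S.faces, ({x, y} : Finset V) ⊆ t) :
    ∃ k l, k ≠ l ∧ ({x, y, k} : Finset V) ∈ S.faces ∧ ({x, y, l} : Finset V) ∈ S.faces ∧
      ∀ m, ({x, y, m} : Finset V) ∈ S.faces → m = k ∨ m = l := by
  obtain ⟨t1, t2, h12, hf⟩ := Finset.card_eq_two.1
    (S.edge_in_two_faces {x, y} (Finset.card_pair hxy) he)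
  have third : ∀ t ∈ S.faces, ({x, y} : Finset V) ⊆ t → ∃ k, t = {x, y, k} := by
    intro t ht hs
    have hc : (t \ {x, y}).card = 1 := by
      rw [Finset.card_sdiff_of_subset hs, S.face_card t ht, Finset.card_pair hxy]
    obtain ⟨k, hk⟩ := Finset.card_eq_one.1 hc
    refine ⟨k, ?_⟩
    have := Finset.sdiff_union_of_subset hs
    rw [hk] at this
    rw [← this]
    ext z
    simp only [Finset.mem_union, Finset.mem_insert, Finset.mem_singleton]
    tauto
  have m1 : t1 ∈ S.faces.filter fun t => ({x, y} : Finset V) ⊆ t := by rw [hf]; simp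
  have m2 : t2 ∈ S.faces.filter fun t => ({x, y} : Finset V) ⊆ t := by rw [hf]; simp
  rw [Finset.mem_filter] at m1 m2
  obtain ⟨k, rfl⟩ := third t1 m1.1 m1.2
  obtain ⟨l, rfl⟩ := third t2 m2.1 m2.2
  refine ⟨k, l, ?_, m1.1, m2.1, ?_⟩
  · rintro rfl
    exact h12 rfl
  · intro m hm
    have m3 : ({x, y, m} : Finset V) ∈ S.faces.filter fun t => ({x, y} : Finset V) ⊆ t := by
      rw [Finset.mem_filter]
      refine ⟨hm, ?_⟩
      intro z hz
      simp only [Finset.mem_insert, Finset.mem_singleton] at hz ⊢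
      tauto
    have hd := S.face_distinct hm
    rw [hf, Finset.mem_insert, Finset.mem_singleton] at m3
    rcases m3 with h | h
    · left
      have : m ∈ ({x, y, k} : Finset V) := by rw [← h]; simp
      simp only [Finset.mem_insert, Finset.mem_singleton] at this
      rcases this with h | h | h
      · exact absurd h.symm hd.2.1
      · exact absurd h.symm hd.2.2
      · exact h
    · right
      have : m ∈ ({x, y, l} : Finset V) := by rw [← h]; simp
      simp only [Finset.mem_insert, Finset.mem_singleton] at this
      rcases this with h | h | h
      · exact absurd h.symm hd.2.1
      · exact absurd h.symm hd.2.2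
      · exact h

/-- A 3-cycle in a link is the whole link. -/
theorem link_three (S : CombClosedSurface V) {v x y z w : V}
    (h1 : ({v, x, y} : Finset V) ∈ S.faces) (h2 : ({v, y, z} : Finset V) ∈ S.faces)
    (h3 : ({v, x, z} : Finset V) ∈ S.faces) (hwv : w ≠ v)
    (hw : ∃ t ∈ S.faces, v ∈ t ∧ w ∈ t) : w = x ∨ w = y ∨ w = z := by
  obtain ⟨hvx, hvy, hxy⟩ := S.face_distinct h1
  obtain ⟨-, hvz, hyz⟩ := S.face_distinct h2
  obtain ⟨-, -, hxz⟩ := S.face_distinct h3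
  have closed : ∀ p q r : V, q ≠ r → ({v, p, q} : Finset V) ∈ S.faces →
      ({v, p, r} : Finset V) ∈ S.faces → ∀ u, ({v, p, u} : Finset V) ∈ S.faces →
      u = q ∨ u = r := by
    intro p q r hqr hq hr u hu
    obtain ⟨k, l, hkl, -, -, hm⟩ := S.edge_faces (S.face_distinct hq).1
      ⟨_, hq, by intro z hz; simp only [Finset.mem_insert, Finset.mem_singleton] at hz ⊢; tauto⟩
    have a1 := hm q hq
    have a2 := hm r hr
    have a3 := hm u hu
    grind
  have sw : ∀ p q : V, ({v, p, q} : Finset V) ∈ S.faces → ({v, q, p} : Finset V) ∈ S.faces := by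
    intro p q h
    rwa [Finset.pair_comm]
  have step : ∀ p u : V, (p = x ∨ p = y ∨ p = z) → ({v, p, u} : Finset V) ∈ S.faces →
      (u = x ∨ u = y ∨ u = z) := by
    rintro p u (rfl | rfl | rfl) hu
    · have := closed _ _ _ hyz h1 h3 u hu
      tauto
    · have := closed _ _ _ hxz (sw _ _ h1) h2 u hu
      tauto
    · have := closed _ _ _ hxy (sw _ _ h3) (sw _ _ h2) u hu
      tauto
  have hx : x ≠ v ∧ ∃ t ∈ S.faces, v ∈ t ∧ x ∈ t := ⟨hvx.symm, _, h1, by simp, by simp⟩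
  obtain ⟨W⟩ := (S.link_connected v).preconnected ⟨x, hx⟩ ⟨w, hwv, hw⟩
  have main : ∀ (p q : {u : V | u ≠ v ∧ ∃ t ∈ S.faces, v ∈ t ∧ u ∈ t})
      (_ : ((SimpleGraph.fromRel fun u w => insert v ({u, w} : Finset V) ∈ S.faces).induce
      {u : V | u ≠ v ∧ ∃ t ∈ S.faces, v ∈ t ∧ u ∈ t}).Walk p q),
      (p.1 = x ∨ p.1 = y ∨ p.1 = z) → (q.1 = x ∨ q.1 = y ∨ q.1 = z) := by
    intro p q W
    induction W with
    | nil => exact id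
    | cons hadj _ ih =>
      intro hp
      apply ih
      simp only [SimpleGraph.comap_adj, SimpleGraph.fromRel_adj,
        Function.Embedding.subtype_apply] at hadj
      rcases hadj.2 with h | h
      · exact step _ _ hp h
      · exact step _ _ hp (sw _ _ h)
  exact main _ _ W (Or.inl rfl)

theorem no_eight (S : CombClosedSurface V) (hV : Fintype.card V = 8)
    (hE : S.edgeSet.card = 27) : False := by
  have hsub : S.edgeSet ⊆ Finset.powersetCard 2 (Finset.univ : Finset V) :=
    Finset.filter_subset _ _
  have hc : (Finset.powersetCard 2 (Finset.univ : Finset V) \ S.edgeSet).card = 1 := by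
    rw [Finset.card_sdiff_of_subset hsub, hE, Finset.card_powersetCard, Finset.card_univ, hV]
    rfl
  obtain ⟨e, he⟩ := Finset.card_eq_one.1 hc
  have he' : e ∈ Finset.powersetCard 2 (Finset.univ : Finset V) \ S.edgeSet := by rw [he]; simp
  rw [Finset.mem_sdiff, Finset.mem_powersetCard] at he'
  obtain ⟨a, b, hab, rfl⟩ := Finset.card_eq_two.1 he'.1.2
  have nonedge : ∀ t ∈ S.faces, a ∈ t → b ∈ t → False := by
    intro t ht ha hb
    apply he'.2
    simp only [edgeSet, Finset.mem_filter, Finset.mem_powersetCard]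
    refine ⟨he'.1, t, ht, ?_⟩
    intro z hz
    simp only [Finset.mem_insert, Finset.mem_singleton] at hz
    rcases hz with rfl | rfl <;> assumption
  have isedge : ∀ x y : V, x ≠ y → ¬ (x = a ∧ y = b) → ¬ (x = b ∧ y = a) →
      ∃ t ∈ S.faces, ({x, y} : Finset V) ⊆ t := by
    intro x y hxy n1 n2
    by_contra hcon
    have : ({x, y} : Finset V) ∈ Finset.powersetCard 2 (Finset.univ : Finset V) \ S.edgeSet := by
      simp only [edgeSet, Finset.mem_sdiff, Finset.mem_filter, Finset.mem_powersetCard]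
      exact ⟨⟨Finset.subset_univ _, Finset.card_pair hxy⟩, fun h => hcon h.2⟩
    rw [he, Finset.mem_singleton] at this
    have hx : x ∈ ({a, b} : Finset V) := by rw [← this]; simp
    have hy : y ∈ ({a, b} : Finset V) := by rw [← this]; simp
    simp only [Finset.mem_insert, Finset.mem_singleton] at hx hy
    grind
  have avoid : ∀ s : Finset V, s.card < 8 → ∃ w, w ∉ s := by
    intro s hs
    by_contra hcon
    push Not at hcon
    have : s = Finset.univ := Finset.eq_univ_iff_forall.2 hcon
    rw [this, Finset.card_univ] at hs
    omega
  have no3 : ∀ v x y z : V, ({v, x, y} : Finset V) ∈ S.faces → ({v, y, z} : Finset V) ∈ S.faces →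
      ({v, x, z} : Finset V) ∈ S.faces → False := by
    intro v x y z h1 h2 h3
    obtain ⟨w, hw⟩ := avoid {v, x, y, z, a, b} (lt_of_le_of_lt Finset.card_le_six (by norm_num))
    simp only [Finset.mem_insert, Finset.mem_singleton, not_or] at hw
    obtain ⟨t, ht, hs⟩ := isedge v w (Ne.symm hw.1) (by tauto) (by tauto)
    have := S.link_three h1 h2 h3 hw.1 ⟨t, ht, hs (by simp), hs (by simp)⟩
    tauto
  obtain ⟨x1, hx1⟩ := avoid {a, b} (lt_of_le_of_lt Finset.card_le_two (by norm_num))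
  simp only [Finset.mem_insert, Finset.mem_singleton, not_or] at hx1
  obtain ⟨x0, x2, h02, f0, f2, -⟩ := S.edge_faces (Ne.symm hx1.1)
    (isedge a x1 (Ne.symm hx1.1) (by tauto) (by tauto))
  have d0 := S.face_distinct f0
  have d2 := S.face_distinct f2
  have hb0 : x0 ≠ b := by rintro rfl; exact nonedge _ f0 (by simp) (by simp)
  have hb2 : x2 ≠ b := by rintro rfl; exact nonedge _ f2 (by simp) (by simp)
  have f3 : ∃ x3, x3 ≠ x1 ∧ ({a, x2, x3} : Finset V) ∈ S.faces := by
    obtain ⟨k, l, hkl, hk, hl, -⟩ := S.edge_faces d2.2.1 (isedge a x2 d2.2.1 (by tauto) (by tauto))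
    by_cases h : k = x1
    · exact ⟨l, by rintro rfl; exact hkl h, hl⟩
    · exact ⟨k, h, hk⟩
  obtain ⟨x3, h31, f3⟩ := f3
  have d3 := S.face_distinct f3
  have hb3 : x3 ≠ b := by rintro rfl; exact nonedge _ f3 (by simp) (by simp)
  have h30 : x3 ≠ x0 := by
    rintro rfl
    exact no3 a x3 x1 x2 (by rwa [Finset.pair_comm]) f2 (by rwa [Finset.pair_comm])
  obtain ⟨x4, hx4⟩ := avoid {x0, x1, x2, x3, a, b}
    (lt_of_le_of_lt Finset.card_le_six (by norm_num))
  obtain ⟨x5, hx5⟩ := avoid (insert x4 {x0, x1, x2, x3, a, b})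
    (lt_of_le_of_lt (Finset.card_insert_le _ _)
      (lt_of_le_of_lt (Nat.add_le_add_right Finset.card_le_six 1) (by norm_num)))
  simp only [Finset.mem_insert, Finset.mem_singleton, not_or] at hx4 hx5
  let g : Fin 8 → V := ![x0, x1, x2, x3, x4, x5, a, b]
  have ginj : Function.Injective g := by
    have hnd : (List.ofFn g).Nodup := by
      simp only [g, List.ofFn_succ, List.ofFn_zero, List.nodup_cons]
      simp
      grind
    exact List.nodup_ofFn.1 hnd
  have gsurj : Function.Surjective g :=
    ((Fintype.bijective_iff_injective_and_card g).2 ⟨ginj, by simp [hV]⟩).2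
  let P : ℕ → Prop := fun c =>
    (Finset.univ.filter fun i : Fin 8 => c.testBit i.1 = true).image g ∈ S.faces
  have hP : ∀ i j k : Fin 8, P (N3Search.code i j k) ↔ ({g i, g j, g k} : Finset V) ∈ S.faces := by
    intro i j k
    have : (Finset.univ.filter fun m : Fin 8 => (N3Search.code i j k).testBit m.1 = true)
        = {i, j, k} := by
      ext m
      simp only [N3Search.code, Nat.testBit_or, Nat.testBit_two_pow, Finset.mem_filter,
        Finset.mem_univ, true_and, Finset.mem_insert, Finset.mem_singleton, Bool.or_eq_true,
        decide_eq_true_eq, Fin.ext_iff]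
      omega
    simp only [P, this, Finset.image_insert, Finset.image_singleton]
  have model : N3Search.Model P := by
    constructor
    · intro i j hi hj hij h67
      have e1 : g ⟨i, hi⟩ ≠ g ⟨j, hj⟩ := fun h => hij (by simpa using ginj h)
      have ga : ∀ i : ℕ, ∀ hi : i < 8, g ⟨i, hi⟩ = a → i = 6 := fun i hi h => by
        have := ginj (h.trans (show a = g 6 from rfl))
        simpa using congrArg Fin.val this
      have gb : ∀ i : ℕ, ∀ hi : i < 8, g ⟨i, hi⟩ = b → i = 7 := fun i hi h => by
        have := ginj (h.trans (show b = g 7 from rfl))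
        simpa using congrArg Fin.val this
      obtain ⟨k, l, hkl, hk, hl, hu⟩ := S.edge_faces e1 (isedge _ _ e1
        (fun h => h67 (by have := ga i hi h.1; have := gb j hj h.2; omega))
        (fun h => h67 (by have := gb i hi h.1; have := ga j hj h.2; omega)))
      obtain ⟨k, rfl⟩ := gsurj k
      obtain ⟨l, rfl⟩ := gsurj l
      have dk := S.face_distinct hk
      have dl := S.face_distinct hl
      have ne : ∀ (p : Fin 8) (q : ℕ) (hq : q < 8), g ⟨q, hq⟩ ≠ g p → p.1 ≠ q := by
        rintro p q hq h rfl
        exact h rfl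
      have hkl' : k.1 ≠ l.1 := fun h => hkl (by rw [Fin.ext h])
      have pk : P (N3Search.code i j k) := (hP ⟨i, hi⟩ ⟨j, hj⟩ k).2 hk
      have pl : P (N3Search.code i j l) := (hP ⟨i, hi⟩ ⟨j, hj⟩ l).2 hl
      have pu : ∀ m, m < 8 → P (N3Search.code i j m) → m = k.1 ∨ m = l.1 := by
        intro m hm h
        rcases hu _ ((hP ⟨i, hi⟩ ⟨j, hj⟩ ⟨m, hm⟩).1 h) with h | h
        · exact Or.inl (congrArg Fin.val (ginj h))
        · exact Or.inr (congrArg Fin.val (ginj h))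
      rcases lt_or_gt_of_ne hkl' with h | h
      · exact ⟨k, l, k.2, l.2, h, ne _ _ _ dk.2.1, ne _ _ _ dk.2.2, ne _ _ _ dl.2.1,
          ne _ _ _ dl.2.2, pk, pl, fun m hm _ _ hh => pu m hm hh⟩
      · exact ⟨l, k, l.2, k.2, h, ne _ _ _ dl.2.1, ne _ _ _ dl.2.2, ne _ _ _ dk.2.1,
          ne _ _ _ dk.2.2, pl, pk, fun m hm _ _ hh => (pu m hm hh).symm⟩
    · intro v x y z hv hx hy hz _ _ _ _ _ _ h1 h2 h3
      exact no3 _ _ _ _ ((hP ⟨v, hv⟩ ⟨x, hx⟩ ⟨y, hy⟩).1 h1) ((hP ⟨v, hv⟩ ⟨y, hy⟩ ⟨z, hz⟩).1 h2)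
        ((hP ⟨v, hv⟩ ⟨x, hx⟩ ⟨z, hz⟩).1 h3)
  refine N3Search.no_model model ?_ ?_ ?_ ?_
  · intro k hk h
    exact nonedge _ ((hP 6 7 ⟨k, by omega⟩).1 h) (by simp [g]) (by simp [g])
  · refine (hP 6 0 1).2 ?_
    rw [Finset.pair_comm]
    exact f0
  · exact (hP 6 1 2).2 f2
  · exact (hP 6 2 3).2 f3

end CombClosedSurface

/-- A triangulation of the non-orientable surface of genus `3`
(the non-orientable closed surface with Euler characteristic `-1`) has at least `9`
vertices.  By the classification of closed surfaces, a connected combinatorial closed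
surface which is non-orientable and has Euler characteristic `f₀ - f₁ + f₂ = -1`
triangulates `N₃`. -/
theorem genus3_nonorientable_vertex_bound {V : Type*} [DecidableEq V] [Fintype V]
    (S : CombClosedSurface V)
    (h_nonorientable : ¬ S.Orientable)
    (h_euler : (Fintype.card V : ℤ) - S.edgeSet.card + S.faces.card = -1) :
    9 ≤ Fintype.card V := by
  have h3 := S.three_faces
  have hle : S.edgeSet.card ≤ (Fintype.card V).choose 2 := by
    have := Finset.card_le_card
      (show S.edgeSet ⊆ Finset.powersetCard 2 (Finset.univ : Finset V) from
        Finset.filter_subset _ _)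
    rwa [Finset.card_powersetCard, Finset.card_univ] at this
  have hE : S.edgeSet.card = 3 * (Fintype.card V + 1) := by omega
  by_contra hlt
  have h8 : Fintype.card V ≤ 8 := by omega
  by_cases h : Fintype.card V = 8
  · exact S.no_eight h (by rw [hE, h])
  · generalize Fintype.card V = n at *
    rw [hE] at hle
    have : n < 8 := by omega
    interval_cases n <;> simp [Nat.choose] at hle
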